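/- Fix σ_1, …, σ_p > 0, σ_y > 0, A ∈ ℝ^p, and let M = diag(σ_1², …, σ_p²). Let 0 < s < 1 and δ ∈ (0,1), and let k ≥ (8/s)·log(2/δ) be an integer. Draw k independent batches, where batch j consists of a matrix X^{(j)} ∈ ℝ^{p×p} with rows i.i.d. N(0, M) and an independent vector η^{(j)} ∈ ℝ^p with i.i.d. N(0, σ_y²) entries, all batches mutually independent; let Ã^{(j)} solve X^{(j)}Ã^{(j)} = X^{(j)}A + η^{(j)}; define Â ∈ ℝ^p coordinate-wise by Â_i = median_{j=1,…,k} Ã_i^{(j)}, and Δ = Â − A. Then Pr( |ΔᵀMΔ| ≤ σ_y²·p·s ) ≥ 1 − p·δ. (In the paper s = ε/(n·d_avg), giving the per-node guarantee |ΔᵀMΔ| ≤ σ_y²·ε·p/(n·d_avg) for the CauchyEstTree estimator.) -/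

import Mathlib

open MeasureTheory ProbabilityTheory Matrix

/-- The centered multivariate Gaussian `N(0, LLᵀ)` on `ℝ^p`, realized as the pushforward
of the standard Gaussian product measure under `x ↦ Lx`. -/
noncomputable def mvg0 {p : ℕ} (L : Matrix (Fin p) (Fin p) ℝ) : Measure (Fin p → ℝ) :=
  Measure.map (fun x => L.mulVec x) (Measure.pi fun _ : Fin p => gaussianReal 0 1)

/-- The sample median of `k` values (the entry at position `⌊k/2⌋` of the sorted list,
`0`-indexed). -/
noncomputable def sampleMedian {k : ℕ} (X : Fin k → ℝ) : ℝ :=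
  ((Multiset.map X Finset.univ.val).sort (· ≤ ·)).getD (k / 2) 0


lemma aux_int (b : ℝ) (hb : 0 < b) :
    ∫⁻ u : ℝ, ENNReal.ofReal (|u| * Real.exp (-b * u ^ 2)) = ENNReal.ofReal (1 / b) := by
  have h1 : ∫ x in Set.Ioi (0:ℝ), x ^ (1:ℝ) * Real.exp (-b * x ^ (2:ℝ)) = 1 / (2 * b) := by
    rw [integral_rpow_mul_exp_neg_mul_rpow (by norm_num) (by norm_num) hb]
    norm_num [Real.rpow_neg_one]
  have h2 : ∫ u : ℝ, |u| * Real.exp (-b * u ^ 2) = 1 / b := by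
    have := integral_comp_abs (f := fun x : ℝ => x * Real.exp (-b * x ^ 2))
    simp only [sq_abs] at this
    rw [this]
    have h3 : ∫ x in Set.Ioi (0:ℝ), x * Real.exp (-b * x ^ 2) = 1 / (2 * b) := by
      rw [← h1]
      simp
    rw [h3]; field_simp
  rw [← h2, ofReal_integral_eq_lintegral_ofReal]
  · apply Integrable.of_integral_ne_zero
    rw [h2]; positivity
  · exact ae_of_all _ fun u => by positivity

lemma ratio_le (S : Set ℝ) (hS : MeasurableSet S) (h0 : (0:ℝ) ∉ S) :
    ((gaussianReal 0 1).prod (gaussianReal 0 1)) {x : ℝ × ℝ | x.2 / x.1 ∈ S}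
      ≤ cauchyMeasure 0 1 S := by
  have hm : MeasurableSet {x : ℝ × ℝ | x.2 / x.1 ∈ S} :=
    (measurable_snd.div measurable_fst) hS
  rw [Measure.prod_apply hm]
  have h1 : ∀ u : ℝ, gaussianReal 0 1 (Prod.mk u ⁻¹' {x : ℝ × ℝ | x.2 / x.1 ∈ S})
      ≤ ∫⁻ t in S, ENNReal.ofReal (|u| * (Real.sqrt (2 * Real.pi))⁻¹ * Real.exp (- (u*t)^2/2)) := by
    intro u
    by_cases hu : u = 0
    · subst hu
      simp [h0]
    have := gaussianReal_map_div_const (μ := 0) (v := 1) u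
    have h2 : Prod.mk u ⁻¹' {x : ℝ × ℝ | x.2 / x.1 ∈ S} = (fun x => x / u) ⁻¹' S := by
      ext; simp
    have hv : ((1 / NNReal.mk (u^2) (sq_nonneg u) : NNReal):ℝ) = (u^2)⁻¹ := by
      rw [NNReal.coe_div]; simp
    rw [h2, ← Measure.map_apply (by fun_prop) hS, this]
    generalize (1 / NNReal.mk (u^2) (sq_nonneg u) : NNReal) = v at hv
    have hv0 : v ≠ 0 := by
      rw [← NNReal.coe_ne_zero, hv]; positivity
    rw [gaussianReal_apply _ hv0]
    apply le_of_eq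
    congr 1
    ext t
    rw [gaussianPDF, gaussianPDFReal]
    congr 1
    have hu2 : Real.sqrt (2 * Real.pi * (u^2)⁻¹) = Real.sqrt (2 * Real.pi) * |u|⁻¹ := by
      rw [Real.sqrt_mul (by positivity), Real.sqrt_inv, Real.sqrt_sq_eq_abs]
    simp only [hv, hu2, zero_div, sub_zero, mul_inv, inv_inv]
    congr 1
    · ring
    · congr 1
      field_simp
  refine (lintegral_mono h1).trans ?_
  rw [gaussianReal_of_var_ne_zero _ one_ne_zero, lintegral_withDensity_eq_lintegral_mul _ (by fun_prop) (by
    apply Measurable.lintegral_prod_right'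
      (f := fun z : ℝ × ℝ => ENNReal.ofReal (|z.1| * (Real.sqrt (2 * Real.pi))⁻¹ * Real.exp (- (z.1*z.2)^2/2)))
    fun_prop)]
  simp only [Pi.mul_apply]
  have h3 : ∀ u : ℝ, gaussianPDF 0 1 u * ∫⁻ t in S, ENNReal.ofReal (|u| * (Real.sqrt (2 * Real.pi))⁻¹ * Real.exp (- (u*t)^2/2))
     = ∫⁻ t in S, ENNReal.ofReal ((2 * Real.pi)⁻¹) * ENNReal.ofReal (|u| * Real.exp (-((1 + t^2)/2) * u ^ 2)) := by
    intro u
    rw [← lintegral_const_mul _ (by fun_prop)]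
    congr 1
    ext t
    rw [gaussianPDF, gaussianPDFReal, ← ENNReal.ofReal_mul (by positivity), ← ENNReal.ofReal_mul (by positivity)]
    congr 1
    have e : Real.exp (-((1 + t^2)/2) * u ^ 2) = Real.exp (-(u-0)^2/(2*((1:NNReal):ℝ))) * Real.exp (- (u*t)^2/2) := by
      rw [← Real.exp_add]; congr 1
      simp; ring
    rw [e]
    have : (2*Real.pi)⁻¹ = (Real.sqrt (2 * Real.pi))⁻¹ * (Real.sqrt (2 * Real.pi))⁻¹ := by
      rw [← mul_inv, Real.mul_self_sqrt (by positivity)]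
    rw [this]
    simp only [NNReal.coe_one, mul_one]
    ring
  simp_rw [h3]
  rw [lintegral_lintegral_swap (by fun_prop), cauchyMeasure_of_scale_ne_zero _ one_ne_zero,
    withDensity_apply _ hS]
  apply le_of_eq
  congr 1
  ext t
  rw [lintegral_const_mul _ (by fun_prop), aux_int _ (by positivity), ← ENNReal.ofReal_mul (by positivity),
    cauchyPDF, cauchyPDFReal]
  congr 1
  simp
  field_simp
  ring

lemma arctan_ge {τ : ℝ} (h0 : 0 ≤ τ) (h1 : τ ≤ 1) : Real.pi / 4 * τ ≤ Real.arctan τ := by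
  have hc : ConcaveOn ℝ (Set.Icc 0 1) Real.arctan := by
    apply AntitoneOn.concaveOn_of_deriv (convex_Icc 0 1) Real.continuous_arctan.continuousOn
      Real.differentiable_arctan.differentiableOn
    intro x hx y hy hxy
    rw [interior_Icc] at hx hy
    simp only [Real.deriv_arctan]
    have := hx.1
    apply one_div_le_one_div_of_le (by positivity)
    gcongr
  have := hc.2 (show (0:ℝ) ∈ Set.Icc 0 1 by simp) (show (1:ℝ) ∈ Set.Icc 0 1 by simp)
    (show 0 ≤ 1 - τ by linarith) h0 (by ring)
  simp only [smul_eq_mul, Real.arctan_zero, Real.arctan_one, mul_zero, mul_one, zero_add] at this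
  linarith

lemma cauchy_Ioi {τ : ℝ} (h0 : 0 ≤ τ) (h1 : τ ≤ 1) :
    cauchyMeasure 0 1 (Set.Ioi τ) ≤ ENNReal.ofReal (1/2 - τ/4) := by
  rw [cauchyMeasure_of_scale_ne_zero _ one_ne_zero, withDensity_apply _ measurableSet_Ioi]
  simp only [cauchyPDF]
  rw [← ofReal_integral_eq_lintegral_ofReal (integrable_cauchyPDFReal 0).integrableOn
    (ae_of_all _ fun x => (cauchyPDF_pos 0 one_ne_zero x).le)]
  apply ENNReal.ofReal_le_ofReal
  have : ∀ x, cauchyPDFReal 0 1 x = Real.pi⁻¹ * (1 + x^2)⁻¹ := by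
    intro x; simp [cauchyPDFReal, add_comm]
  simp_rw [this]
  rw [integral_const_mul, integral_Ioi_inv_one_add_sq]
  have := arctan_ge h0 h1
  have hp := Real.pi_pos
  rw [inv_mul_le_iff₀ hp]
  linarith

lemma cauchy_Iio {τ : ℝ} (h0 : 0 ≤ τ) (h1 : τ ≤ 1) :
    cauchyMeasure 0 1 (Set.Iio (-τ)) ≤ ENNReal.ofReal (1/2 - τ/4) := by
  refine (measure_mono Set.Iio_subset_Iic_self).trans ?_
  rw [cauchyMeasure_of_scale_ne_zero _ one_ne_zero, withDensity_apply _ measurableSet_Iic]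
  simp only [cauchyPDF]
  rw [← ofReal_integral_eq_lintegral_ofReal (integrable_cauchyPDFReal 0).integrableOn
    (ae_of_all _ fun x => (cauchyPDF_pos 0 one_ne_zero x).le)]
  apply ENNReal.ofReal_le_ofReal
  have : ∀ x, cauchyPDFReal 0 1 x = Real.pi⁻¹ * (1 + x^2)⁻¹ := by
    intro x; simp [cauchyPDFReal, add_comm]
  simp_rw [this]
  rw [integral_const_mul, integral_Iic_inv_one_add_sq, Real.arctan_neg]
  have := arctan_ge h0 h1
  have hp := Real.pi_pos
  rw [inv_mul_le_iff₀ hp]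
  linarith

lemma gauss_dot {p : ℕ} (c : Fin p → ℝ) :
    (Measure.pi fun _ : Fin p => gaussianReal 0 1).map (fun x => c ⬝ᵥ x)
      = gaussianReal 0 (∑ r, c r ^ 2).toNNReal := by
  have hi : iIndepFun (fun r (x : Fin p → ℝ) => c r * x r)
      (Measure.pi fun _ : Fin p => gaussianReal 0 1) :=
    iIndepFun_pi (X := fun r x => c r * x) (fun r => by fun_prop)
  apply Measure.ext_of_charFun
  have := hi.charFun_map_fun_sum_eq_prod (fun r => Measurable.aemeasurable (by fun_prop))
  change charFun (Measure.map (fun x : Fin p → ℝ => ∑ r, c r * x r) _) = _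
  rw [this]
  ext t
  have h1 : ∀ r, (Measure.pi fun _ : Fin p => gaussianReal 0 1).map (fun x => c r * x r)
      = gaussianReal 0 (c r ^ 2).toNNReal := by
    intro r
    have h2 := (measurePreserving_eval (fun _ : Fin p => gaussianReal 0 1) r).map_eq
    have h3 := Measure.map_map (μ := Measure.pi fun _ : Fin p => gaussianReal 0 1)
      (g := fun x : ℝ => c r * x) (f := Function.eval (β := fun _ : Fin p => ℝ) r)
      (by fun_prop) (by fun_prop)
    change _ = Measure.map (fun x : Fin p → ℝ => c r * x r) _ at h3
    rw [← h3, h2, gaussianReal_map_const_mul]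
    congr 1
    · simp
    · ext; simp [sq_nonneg]
  simp only [Finset.prod_apply, h1, charFun_gaussianReal]
  rw [← Complex.exp_sum]
  congr 1
  have hs : 0 ≤ ∑ r, c r ^ 2 := by positivity
  simp only [Real.coe_toNNReal _ hs, Real.coe_toNNReal _ (sq_nonneg _)]
  push_cast
  simp [Finset.sum_mul, Finset.sum_div]

lemma gauss_dot_scale {p : ℕ} (c : Fin p → ℝ) :
    (Measure.pi fun _ : Fin p => gaussianReal 0 1).map (fun x => c ⬝ᵥ x)
      = (gaussianReal 0 1).map (fun x => Real.sqrt (∑ r, c r ^ 2) * x) := by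
  rw [gauss_dot, gaussianReal_map_const_mul]
  congr 1
  · simp
  · have hs : 0 ≤ ∑ r, c r ^ 2 := by positivity
    ext; simp [Real.sq_sqrt hs, hs]

lemma dot_ratio_le {p : ℕ} (c : Fin p → ℝ) (S : Set ℝ) (hS : MeasurableSet S) (h0 : (0:ℝ) ∉ S) :
    ((Measure.pi fun _ : Fin p => gaussianReal 0 1).prod
      (Measure.pi fun _ : Fin p => gaussianReal 0 1)) {x | (c ⬝ᵥ x.2) / (c ⬝ᵥ x.1) ∈ S}
      ≤ cauchyMeasure 0 1 S := by
  have hmc : Measurable (fun x : Fin p → ℝ => c ⬝ᵥ x) := by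
    unfold dotProduct; fun_prop
  have hm : MeasurableSet {x : ℝ × ℝ | x.2 / x.1 ∈ S} :=
    (measurable_snd.div measurable_fst) hS
  have e1 : {x : (Fin p → ℝ) × (Fin p → ℝ) | (c ⬝ᵥ x.2) / (c ⬝ᵥ x.1) ∈ S} =
      (Prod.map (fun x => c ⬝ᵥ x) (fun x => c ⬝ᵥ x)) ⁻¹' {x : ℝ × ℝ | x.2 / x.1 ∈ S} := rfl
  rw [e1, ← Measure.map_apply (by fun_prop) hm, ← Measure.map_prod_map _ _ hmc hmc, gauss_dot_scale,
    Measure.map_prod_map _ _ (by fun_prop) (by fun_prop), Measure.map_apply (by fun_prop) hm]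
  refine (measure_mono ?_).trans (ratio_le S hS h0)
  rintro ⟨u, w⟩ h
  simp only [Set.mem_preimage, Prod.map_apply, Set.mem_ofPred_eq] at h ⊢
  by_cases hz : Real.sqrt (∑ r, c r ^ 2) = 0
  · simp [hz, h0] at h
  · rwa [mul_div_mul_left _ _ hz] at h

lemma dot_ne_zero {p : ℕ} (c : Fin p → ℝ) (hc : c ≠ 0) :
    (Measure.pi fun _ : Fin p => gaussianReal 0 1) {x | c ⬝ᵥ x = 0} = 0 := by
  have hmc : Measurable (fun x : Fin p → ℝ => c ⬝ᵥ x) := by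
    unfold dotProduct; fun_prop
  have : {x : Fin p → ℝ | c ⬝ᵥ x = 0} = (fun x => c ⬝ᵥ x) ⁻¹' {0} := rfl
  rw [this, ← Measure.map_apply hmc (measurableSet_singleton 0), gauss_dot]
  have hne : (∑ r, c r ^ 2).toNNReal ≠ 0 := by
    obtain ⟨r, hr⟩ := Function.ne_iff.mp hc
    have : 0 < ∑ r, c r ^ 2 :=
      Finset.sum_pos' (fun i _ => sq_nonneg _) ⟨r, Finset.mem_univ _, by simp at hr; positivity⟩
    simpa using this
  have := nullSingletonClass_gaussianReal (μ := 0) hne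
  exact measure_singleton 0

/-- Standard Gaussian matrices. -/
noncomputable def gmat (p : ℕ) : Measure (Fin p → Fin p → ℝ) :=
  Measure.pi fun _ => Measure.pi fun _ => gaussianReal 0 1

/-- Standard Gaussian vectors. -/
noncomputable def gvec (p : ℕ) : Measure (Fin p → ℝ) :=
  Measure.pi fun _ => gaussianReal 0 1

instance (p : ℕ) : IsProbabilityMeasure (gmat p) := by unfold gmat; infer_instance
instance (p : ℕ) : IsProbabilityMeasure (gvec p) := by unfold gvec; infer_instance

lemma resample_row (p : ℕ) (i : Fin p) :
    MeasurePreserving (fun z : (Fin p → ℝ) × ℝ => Function.update z.1 i z.2)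
      ((gvec p).prod (gaussianReal 0 1)) (gvec p) := by
  have hm : Measurable (fun z : (Fin p → ℝ) × ℝ => Function.update z.1 i z.2) := by
    rw [measurable_pi_iff]
    intro a
    by_cases h : a = i
    · subst h; simp; fun_prop
    · simp [h]; fun_prop
  refine ⟨hm, ?_⟩
  unfold gvec
  symm
  apply Measure.pi_eq
  intro s hs
  rw [Measure.map_apply hm (MeasurableSet.univ_pi hs)]
  have : (fun z : (Fin p → ℝ) × ℝ => Function.update z.1 i z.2) ⁻¹' (Set.univ.pi s)
      = (Set.univ.pi (Function.update s i Set.univ)) ×ˢ s i := by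
    ext z
    simp only [Set.mem_preimage, Set.mem_pi, Set.mem_univ, true_imp_iff, Set.mem_prod]
    constructor
    · intro h
      refine ⟨fun a => ?_, by simpa using h i⟩
      by_cases ha : a = i
      · subst ha; simp
      · simpa [ha] using h a
    · rintro ⟨h1, h2⟩ a
      by_cases ha : a = i
      · subst ha; simpa using h2
      · simpa [ha] using h1 a
  rw [this, Measure.prod_prod, Measure.pi_pi, ← Finset.mul_prod_erase Finset.univ _ (Finset.mem_univ i),
    ← Finset.mul_prod_erase Finset.univ (fun j => gaussianReal 0 1 (s j)) (Finset.mem_univ i)]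
  simp only [Function.update_self, measure_univ, one_mul]
  rw [mul_comm]
  congr 1
  apply Finset.prod_congr rfl
  intro a ha
  rw [Function.update_of_ne (Finset.ne_of_mem_erase ha)]

lemma resample (p : ℕ) (i : Fin p) :
    MeasurePreserving (fun z : (Fin p → Fin p → ℝ) × (Fin p → ℝ) =>
        fun r => Function.update (z.1 r) i (z.2 r))
      ((gmat p).prod (gvec p)) (gmat p) := by
  have h1 := (measurePreserving_arrowProdEquivProdArrow (Fin p → ℝ) ℝ (Fin p) (fun _ => gvec p)
    (fun _ => gaussianReal 0 1)).symm
  have h2 := measurePreserving_pi (fun _ : Fin p => (gvec p).prod (gaussianReal 0 1))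
    (fun _ => gvec p) (fun _ => resample_row p i)
  exact h2.comp h1

lemma meas_det {p : ℕ} : Measurable (fun Z : Fin p → Fin p → ℝ => (Matrix.of Z).det) := by
  apply Continuous.measurable
  apply Continuous.matrix_det
  exact continuous_id

lemma det_update {p : ℕ} (Z : Fin p → Fin p → ℝ) (i : Fin p) (y : Fin p → ℝ) :
    (Matrix.of (fun r => Function.update (Z r) i (y r))).det = (Matrix.of Z).adjugate i ⬝ᵥ y := by
  have h := congrFun (Matrix.cramer_eq_adjugate_mulVec (Matrix.of Z) y) i
  rw [Matrix.cramer_apply] at h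
  change _ = _ ⬝ᵥ y at h
  rw [← h]
  rfl

/-- Replace columns outside `S` by identity columns. -/
noncomputable def mixm {p : ℕ} (S : Finset (Fin p)) (Z : Fin p → Fin p → ℝ) : Fin p → Fin p → ℝ :=
  fun r c => if c ∈ S then Z r c else (1 : Matrix (Fin p) (Fin p) ℝ) r c

lemma meas_mixm {p : ℕ} (S : Finset (Fin p)) : Measurable (mixm S) := by
  unfold mixm
  rw [measurable_pi_iff]; intro r
  rw [measurable_pi_iff]; intro c
  split_ifs <;> fun_prop

lemma det_mix {p : ℕ} (S : Finset (Fin p)) : gmat p {Z | (Matrix.of (mixm S Z)).det = 0} = 0 := by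
  have hmeas : ∀ S : Finset (Fin p), MeasurableSet {Z | (Matrix.of (mixm S Z)).det = 0} := fun S =>
    (meas_det.comp (meas_mixm S)) (measurableSet_singleton 0)
  induction S using Finset.induction_on with
  | empty =>
    have : ∀ Z : Fin p → Fin p → ℝ, Matrix.of (mixm ∅ Z) = 1 := by
      intro Z; ext r c; simp [mixm]
    simp [this]
  | insert i S hi ih =>
    have h := (resample p i).measure_preimage (hmeas (insert i S)).nullMeasurableSet
    rw [← h, Measure.measure_prod_null ((resample p i).measurable (hmeas _))]
    have hae : ∀ᵐ Z ∂(gmat p), (Matrix.of (mixm S Z)).det ≠ 0 := by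
      rw [ae_iff]; simpa using ih
    filter_upwards [hae] with Z hZ
    have key : ∀ y : Fin p → ℝ, mixm (insert i S) (fun r => Function.update (Z r) i (y r))
        = fun r => Function.update (mixm S Z r) i (y r) := by
      intro y; ext r c
      by_cases hc : c = i
      · subst hc; simp [mixm]
      · simp [mixm, hc]
    have e : Prod.mk Z ⁻¹' ((fun z : (Fin p → Fin p → ℝ) × (Fin p → ℝ) =>
        fun r => Function.update (z.1 r) i (z.2 r)) ⁻¹' {Z | (Matrix.of (mixm (insert i S) Z)).det = 0})
        = {y | (Matrix.of (mixm S Z)).adjugate i ⬝ᵥ y = 0} := by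
      ext y
      simp only [Set.mem_preimage, Set.mem_ofPred_eq, key, det_update]
    rw [e]
    apply dot_ne_zero
    intro h0
    apply hZ
    have := det_update (mixm S Z) i (fun r => mixm S Z r i)
    rw [h0, zero_dotProduct] at this
    simpa using this

lemma det_ne {p : ℕ} : gmat p {Z | (Matrix.of Z).det = 0} = 0 := by
  have := det_mix (p := p) Finset.univ
  have e : ∀ Z : Fin p → Fin p → ℝ, mixm Finset.univ Z = Z := by
    intro Z; ext r c; simp [mixm]
  simpa only [e] using this

/-- The error coordinate. -/
noncomputable def err {p : ℕ} (i : Fin p) (z : (Fin p → Fin p → ℝ) × (Fin p → ℝ)) : ℝ :=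
  ((Matrix.of z.1)⁻¹ *ᵥ z.2) i

lemma err_eq {p : ℕ} (i : Fin p) (z : (Fin p → Fin p → ℝ) × (Fin p → ℝ)) :
    err i z = ((Matrix.of z.1).adjugate i ⬝ᵥ z.2) / (Matrix.of z.1).det := by
  rw [err, Matrix.inv_def, Matrix.smul_mulVec, Ring.inverse_eq_inv, Pi.smul_apply, smul_eq_mul,
    div_eq_inv_mul]
  rfl

lemma meas_err {p : ℕ} (i : Fin p) : Measurable (err i : (Fin p → Fin p → ℝ) × (Fin p → ℝ) → ℝ) := by
  have : (err i : (Fin p → Fin p → ℝ) × (Fin p → ℝ) → ℝ) = fun z =>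
    (Matrix.of (fun r => Function.update (z.1 r) i (z.2 r))).det / (Matrix.of z.1).det := by
    ext z; rw [err_eq, det_update]
  rw [this]
  apply Measurable.div
  · exact meas_det.comp (resample p i).measurable
  · exact meas_det.comp measurable_fst

lemma err_le {p : ℕ} (i : Fin p) (S : Set ℝ) (hS : MeasurableSet S) (h0 : (0:ℝ) ∉ S) :
    ((gmat p).prod (gvec p)) {z | err i z ∈ S} ≤ cauchyMeasure 0 1 S := by
  have hm : MeasurableSet {z : (Fin p → Fin p → ℝ) × (Fin p → ℝ) | err i z ∈ S} := meas_err i hS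
  have hp := (resample p i).prod (MeasurePreserving.id (gvec p))
  have hq := hp.comp (measurePreserving_prodAssoc (gmat p) (gvec p) (gvec p)).symm
  rw [← hq.measure_preimage hm.nullMeasurableSet, Measure.prod_apply (hq.measurable hm)]
  calc _ ≤ ∫⁻ Z, cauchyMeasure 0 1 S ∂(gmat p) := by
        apply lintegral_mono
        intro Z
        refine le_trans (measure_mono ?_) (dot_ratio_le ((Matrix.of Z).adjugate i) S hS h0)
        rintro ⟨y, η⟩ h
        change err i (fun r => Function.update (Z r) i (y r), η) ∈ S at h
        change (Matrix.of Z).adjugate i ⬝ᵥ η / (Matrix.of Z).adjugate i ⬝ᵥ y ∈ S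
        rw [err_eq, ← det_update, det_update Z i y] at h
        rw [← det_update Z i η]
        simpa using h
    _ = _ := by simp

lemma median_gt {k : ℕ} (hk : 0 < k) (X : Fin k → ℝ) (t : ℝ) (h : t < sampleMedian X) :
    k ≤ 2 * (Finset.univ.filter fun j => t < X j).card := by
  unfold sampleMedian at h
  set L := (Multiset.map X Finset.univ.val).sort (· ≤ ·) with hL
  have hlen : L.length = k := by simp [hL]
  have hco : (L : Multiset ℝ) = Multiset.map X Finset.univ.val := Multiset.sort_eq _ _
  have hsort : L.Pairwise (· ≤ ·) := Multiset.pairwise_sort _ _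
  have hcount : (Finset.univ.filter fun j => t < X j).card = L.countP (fun x => decide (t < x)) := by
    rw [← Multiset.coe_countP, hco, Multiset.countP_map]
    rfl
  have hlt : k / 2 < L.length := by omega
  rw [List.getD_eq_getElem _ _ hlt] at h
  rw [hcount, ← List.take_append_drop (k/2) L, List.countP_append]
  have hd : (L.drop (k/2)).countP (fun x => decide (t < x)) = (L.drop (k/2)).length := by
    rw [List.countP_eq_length]
    intro a ha
    obtain ⟨n, hn, rfl⟩ := List.getElem_of_mem ha
    rw [List.getElem_drop]
    simp only [decide_eq_true_eq]
    refine lt_of_lt_of_le h ?_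
    rcases Nat.eq_zero_or_pos n with rfl | hn0
    · simp
    · exact List.pairwise_iff_getElem.mp hsort _ _ _ _ (by omega)
  rw [hd, List.length_drop, hlen]
  omega

lemma median_lt {k : ℕ} (hk : 0 < k) (X : Fin k → ℝ) (t : ℝ) (h : sampleMedian X < t) :
    k ≤ 2 * (Finset.univ.filter fun j => X j < t).card := by
  unfold sampleMedian at h
  set L := (Multiset.map X Finset.univ.val).sort (· ≤ ·) with hL
  have hlen : L.length = k := by simp [hL]
  have hco : (L : Multiset ℝ) = Multiset.map X Finset.univ.val := Multiset.sort_eq _ _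
  have hsort : L.Pairwise (· ≤ ·) := Multiset.pairwise_sort _ _
  have hcount : (Finset.univ.filter fun j => X j < t).card = L.countP (fun x => decide (x < t)) := by
    rw [← Multiset.coe_countP, hco, Multiset.countP_map]
    rfl
  have hlt : k / 2 < L.length := by omega
  rw [List.getD_eq_getElem _ _ hlt] at h
  rw [hcount, ← List.take_append_drop (k/2+1) L, List.countP_append]
  have hd : (L.take (k/2+1)).countP (fun x => decide (x < t)) = (L.take (k/2+1)).length := by
    rw [List.countP_eq_length]
    intro a ha
    obtain ⟨n, hn, rfl⟩ := List.getElem_of_mem ha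
    rw [List.getElem_take]
    simp only [decide_eq_true_eq]
    refine lt_of_le_of_lt ?_ h
    rw [List.length_take] at hn
    rcases Nat.lt_or_ge n (k/2) with hn0 | hn0
    · exact List.pairwise_iff_getElem.mp hsort _ _ _ _ hn0
    · have : n = k / 2 := by omega
      subst this; exact le_rfl
  rw [hd, List.length_take, hlen]
  omega

lemma hoeff {α : Type*} [MeasurableSpace α] (ν : Measure α) [IsProbabilityMeasure ν]
    (B : Set α) (hB : MeasurableSet B) {τ : ℝ} (h0 : 0 ≤ τ) (h1 : τ ≤ 1)
    (hν : ν B ≤ ENNReal.ofReal (1/2 - τ/4)) (k : ℕ) (hk : 0 < k) [DecidablePred (· ∈ B)] :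
    (Measure.pi fun _ : Fin k => ν) {ω | k ≤ 2 * (Finset.univ.filter fun j => ω j ∈ B).card}
      ≤ ENNReal.ofReal (Real.exp (- k * τ^2 / 8)) := by
  set μ := Measure.pi fun _ : Fin k => ν
  set f : α → ℝ := B.indicator 1
  have hf : Measurable f := measurable_one.indicator hB
  set m := ν.real B
  have hm : m ≤ 1/2 - τ/4 := ENNReal.toReal_le_of_le_ofReal (by linarith) hν
  have hX : ∀ j : Fin k, Measurable fun ω : Fin k → α => f (ω j) := fun j => by fun_prop
  have hint : ∀ j : Fin k, ∫ ω, f (ω j) ∂μ = m := by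
    intro j
    rw [integral_comp_eval (μ := fun _ : Fin k => ν) (f := f) hf.aestronglyMeasurable]
    exact integral_indicator_one hB
  have hsub : ∀ j : Fin k, HasSubgaussianMGF (fun ω : Fin k → α => f (ω j) - m) (1/4) μ := by
    intro j
    have := hasSubgaussianMGF_of_mem_Icc (μ := μ) (a := 0) (b := 1) (hX j).aemeasurable
      (ae_of_all _ fun ω => by
        simp only [f]
        by_cases h : ω j ∈ B <;> simp [h])
    rw [hint j] at this
    convert this using 1
    ext; norm_num
  have hind : iIndepFun (fun (j : Fin k) (ω : Fin k → α) => f (ω j) - m) μ :=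
    iIndepFun_pi (X := fun _ x => f x - m) (fun _ => by fun_prop)
  have key := HasSubgaussianMGF.measure_sum_ge_le_of_iIndepFun hind (s := Finset.univ)
    (fun j _ => hsub j) (ε := k * τ / 4) (by positivity)
  have hk' : (0:ℝ) < k := by exact_mod_cast hk
  have e : Real.exp (-(k * τ / 4)^2 / (2 * ((∑ j : Fin k, (1/4 : NNReal) : NNReal):ℝ)))
      = Real.exp (- k * τ^2 / 8) := by
    congr 1
    simp
    field_simp
    ring
  rw [← ENNReal.ofReal_toReal (measure_ne_top μ _)]
  apply ENNReal.ofReal_le_ofReal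
  rw [← e]
  refine le_trans ?_ (key.trans_eq ?_)
  · apply measureReal_mono _ (measure_ne_top μ _)
    intro ω hω
    simp only [Set.mem_ofPred_eq] at hω ⊢
    rw [Finset.sum_sub_distrib]
    have hs : ∑ j, f (ω j) = ((Finset.univ.filter fun j => ω j ∈ B).card : ℝ) := by
      simp [f, Set.indicator_apply]
    rw [hs]
    simp only [Finset.sum_const, Finset.card_univ, Fintype.card_fin, nsmul_eq_mul]
    have : (k:ℝ) ≤ 2 * ((Finset.univ.filter fun j => ω j ∈ B).card : ℝ) := by exact_mod_cast hω
    nlinarith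
  · push_cast; rfl

/-- The law of a single batch. -/
noncomputable def batch {p : ℕ} (σ : Fin p → ℝ) (σy : ℝ) :
    Measure ((Fin p → Fin p → ℝ) × (Fin p → ℝ)) :=
  (Measure.pi fun _ : Fin p => mvg0 (Matrix.diagonal σ)).prod
            (Measure.pi fun _ : Fin p => gaussianReal 0 ((σy ^ 2).toNNReal))

lemma mvg_pres {p : ℕ} (σ : Fin p → ℝ) :
    MeasurePreserving (fun x : Fin p → ℝ => fun c => σ c * x c) (gvec p)
      (mvg0 (Matrix.diagonal σ)) := by
  have e : (fun x : Fin p → ℝ => fun c => σ c * x c) = fun x => (Matrix.diagonal σ) *ᵥ x := by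
    ext x c; simp [Matrix.mulVec_diagonal]
  refine ⟨by fun_prop, ?_⟩
  rw [e]; rfl

instance {p : ℕ} (σ : Fin p → ℝ) : IsProbabilityMeasure (mvg0 (Matrix.diagonal σ)) := by
  rw [← (mvg_pres σ).map_eq]
  exact Measure.isProbabilityMeasure_map (mvg_pres σ).measurable.aemeasurable

instance {p : ℕ} (σ : Fin p → ℝ) (σy : ℝ) : IsProbabilityMeasure (batch σ σy) := by
  unfold batch; infer_instance

lemma batch_pres {p : ℕ} (σ : Fin p → ℝ) (σy : ℝ) :
    MeasurePreserving (fun z : (Fin p → Fin p → ℝ) × (Fin p → ℝ) =>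
      ((fun r c => σ c * z.1 r c, fun r => σy * z.2 r) : (Fin p → Fin p → ℝ) × (Fin p → ℝ)))
      ((gmat p).prod (gvec p)) (batch σ σy) := by
  have h1 := measurePreserving_pi (fun _ : Fin p => gvec p)
    (fun _ : Fin p => mvg0 (Matrix.diagonal σ)) (fun _ => mvg_pres σ)
  have h0 : MeasurePreserving (fun x : ℝ => σy * x) (gaussianReal 0 1)
      (gaussianReal 0 ((σy ^ 2).toNNReal)) := by
    refine ⟨by fun_prop, ?_⟩
    rw [gaussianReal_map_const_mul]
    congr 1
    · simp
    · ext; simp [sq_nonneg]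
  have h2 := measurePreserving_pi (fun _ : Fin p => gaussianReal 0 1)
    (fun _ : Fin p => gaussianReal 0 ((σy ^ 2).toNNReal)) (fun _ => h0)
  exact h1.prod h2

lemma of_scale {p : ℕ} (σ : Fin p → ℝ) (Z : Fin p → Fin p → ℝ) :
    Matrix.of (fun r c => σ c * Z r c) = Matrix.of Z * Matrix.diagonal σ := by
  ext r c; simp [Matrix.mul_diagonal, mul_comm]

lemma batch_det {p : ℕ} (σ : Fin p → ℝ) (hσ : ∀ i, 0 < σ i) (σy : ℝ) :
    batch σ σy {z | (Matrix.of z.1).det = 0} = 0 := by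
  have hm : MeasurableSet {z : (Fin p → Fin p → ℝ) × (Fin p → ℝ) | (Matrix.of z.1).det = 0} :=
    (meas_det.comp measurable_fst) (measurableSet_singleton 0)
  rw [← (batch_pres σ σy).measure_preimage hm.nullMeasurableSet]
  have : (fun z : (Fin p → Fin p → ℝ) × (Fin p → ℝ) =>
      ((fun r c => σ c * z.1 r c, fun r => σy * z.2 r) : (Fin p → Fin p → ℝ) × (Fin p → ℝ))) ⁻¹'
      {z | (Matrix.of z.1).det = 0} = {Z | (Matrix.of Z).det = 0} ×ˢ Set.univ := by
    ext z
    simp only [Set.mem_preimage, Set.mem_ofPred_eq, of_scale, Matrix.det_mul, Matrix.det_diagonal,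
      Set.mem_prod, Set.mem_univ, and_true]
    have : ∏ i, σ i ≠ 0 := (Finset.prod_pos fun i _ => hσ i).ne'
    simp [this]
  rw [this, Measure.prod_prod, det_ne, zero_mul]

lemma batch_err {p : ℕ} (σ : Fin p → ℝ) (hσ : ∀ i, 0 < σ i) (σy : ℝ) (hσy : 0 < σy) (i : Fin p)
    (S : Set ℝ) (hS : MeasurableSet S) (h0 : (0:ℝ) ∉ S) :
    batch σ σy {z | σ i / σy * err i z ∈ S} ≤ cauchyMeasure 0 1 S := by
  have hm : MeasurableSet {z : (Fin p → Fin p → ℝ) × (Fin p → ℝ) | σ i / σy * err i z ∈ S} :=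
    ((meas_err i).const_mul _) hS
  rw [← (batch_pres σ σy).measure_preimage hm.nullMeasurableSet]
  refine le_trans (measure_mono ?_) (err_le i S hS h0)
  intro z hz
  simp only [Set.mem_preimage, Set.mem_ofPred_eq] at hz ⊢
  convert hz using 1
  have hinv : (Matrix.diagonal σ)⁻¹ = Matrix.diagonal fun i => (σ i)⁻¹ := by
    apply Matrix.inv_eq_right_inv
    rw [Matrix.diagonal_mul_diagonal]
    simp [(hσ _).ne']
  have hv : (fun r => σy * z.2 r) = σy • z.2 := rfl
  simp only [err, of_scale, Matrix.mul_inv_rev, hinv, hv, Matrix.mulVec_smul, Pi.smul_apply,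
    smul_eq_mul, ← Matrix.mulVec_mulVec, Matrix.mulVec_diagonal]
  have := (hσ i).ne'
  field_simp

/-- Lemma 4.5, per-node guarantee of CauchyEstTree: with `M = diag(σ₁²,…,σ_p²)` and
`k ≥ (8/s)·log(2/δ)` independent batches, each consisting of a design `X⁽ʲ⁾ ∈ ℝ^{p×p}`
with rows i.i.d. `N(0,M)` and independent noise `η⁽ʲ⁾` with i.i.d. `N(0,σ_y²)` entries,
letting `Ã⁽ʲ⁾` solve `X⁽ʲ⁾Ã⁽ʲ⁾ = X⁽ʲ⁾A + η⁽ʲ⁾`, `Â` the coordinate-wise median of the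
`Ã⁽ʲ⁾` and `Δ = Â − A`, one has `Pr(|ΔᵀMΔ| ≤ σ_y²·p·s) ≥ 1 − p·δ`. -/
theorem stmt_13 (p : ℕ) (σ : Fin p → ℝ) (hσ : ∀ i, 0 < σ i) (σy : ℝ) (hσy : 0 < σy)
    (A : Fin p → ℝ) (s δ : ℝ) (hs0 : 0 < s) (hs1 : s < 1) (hδ0 : 0 < δ) (hδ1 : δ < 1)
    (k : ℕ) (hk : (8 / s) * Real.log (2 / δ) ≤ (k : ℝ)) :
    ENNReal.ofReal (1 - (p : ℝ) * δ) ≤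
      (Measure.pi fun _ : Fin k =>
          (Measure.pi fun _ : Fin p => mvg0 (Matrix.diagonal σ)).prod
            (Measure.pi fun _ : Fin p => gaussianReal 0 ((σy ^ 2).toNNReal)))
        {ω | let Atil : Fin k → Fin p → ℝ := fun j =>
               (Matrix.of (ω j).1)⁻¹.mulVec ((Matrix.of (ω j).1).mulVec A + (ω j).2)
             let Δ : Fin p → ℝ := (fun i => sampleMedian fun j => Atil j i) - A
             |Δ ⬝ᵥ (Matrix.diagonal fun i => σ i ^ 2).mulVec Δ|
               ≤ σy ^ 2 * (p : ℝ) * s} := by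
  classical
  change _ ≤ (Measure.pi fun _ : Fin k => batch σ σy) _
  set μ := Measure.pi fun _ : Fin k => batch σ σy with hμ
  set T : Set (Fin k → (Fin p → Fin p → ℝ) × (Fin p → ℝ)) := _ with hT
  change _ ≤ μ T
  have hlog : 0 < Real.log (2 / δ) := Real.log_pos (by rw [lt_div_iff₀ hδ0]; linarith)
  have hk0 : 0 < k := by
    have : (0:ℝ) < k := lt_of_lt_of_le (by positivity) hk
    exact_mod_cast this
  set τ := Real.sqrt s with hτ
  have hτ0 : 0 < τ := Real.sqrt_pos.mpr hs0
  have hτs : τ ^ 2 = s := Real.sq_sqrt hs0.le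
  have hτ1 : τ ≤ 1 := by nlinarith
  have hexp : Real.exp (-k * τ^2/8) ≤ δ / 2 := by
    rw [hτs]
    have : Real.exp (-Real.log (2/δ)) = δ/2 := by
      rw [Real.exp_neg, Real.exp_log (by positivity), inv_div]
    rw [← this]
    apply Real.exp_le_exp.mpr
    rw [div_mul_eq_mul_div, div_le_iff₀ hs0] at hk
    linarith
  let Bp : Fin p → Set ((Fin p → Fin p → ℝ) × (Fin p → ℝ)) := fun i => {z | σ i / σy * err i z ∈ Set.Ioi τ}
  let Bm : Fin p → Set ((Fin p → Fin p → ℝ) × (Fin p → ℝ)) := fun i => {z | σ i / σy * err i z ∈ Set.Iio (-τ)}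
  let Ep : Fin p → Set (Fin k → (Fin p → Fin p → ℝ) × (Fin p → ℝ)) := fun i =>
    {ω | k ≤ 2 * (Finset.univ.filter fun j => ω j ∈ Bp i).card}
  let Em : Fin p → Set (Fin k → (Fin p → Fin p → ℝ) × (Fin p → ℝ)) := fun i =>
    {ω | k ≤ 2 * (Finset.univ.filter fun j => ω j ∈ Bm i).card}
  let N : Fin k → Set (Fin k → (Fin p → Fin p → ℝ) × (Fin p → ℝ)) := fun j =>
    (Function.eval j) ⁻¹' {z | (Matrix.of z.1).det = 0}
  have hEp : ∀ i, μ (Ep i) ≤ ENNReal.ofReal (δ/2) := fun i =>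
    (hoeff (batch σ σy) (Bp i) (((meas_err i).const_mul _) measurableSet_Ioi) hτ0.le hτ1
      ((batch_err σ hσ σy hσy i _ measurableSet_Ioi (by simp [hτ0.le])).trans (cauchy_Ioi hτ0.le hτ1))
      k hk0).trans (ENNReal.ofReal_le_ofReal hexp)
  have hEm : ∀ i, μ (Em i) ≤ ENNReal.ofReal (δ/2) := fun i =>
    (hoeff (batch σ σy) (Bm i) (((meas_err i).const_mul _) measurableSet_Iio) hτ0.le hτ1
      ((batch_err σ hσ σy hσy i _ measurableSet_Iio (by simp [hτ0.le])).trans (cauchy_Iio hτ0.le hτ1))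
      k hk0).trans (ENNReal.ofReal_le_ofReal hexp)
  have hN : ∀ j, μ (N j) = 0 := by
    intro j
    have hm : MeasurableSet {z : (Fin p → Fin p → ℝ) × (Fin p → ℝ) | (Matrix.of z.1).det = 0} :=
      (meas_det.comp measurable_fst) (measurableSet_singleton 0)
    rw [(measurePreserving_eval (fun _ : Fin k => batch σ σy) j).measure_preimage hm.nullMeasurableSet]
    exact batch_det σ hσ σy
  have hsub : Tᶜ ⊆ (⋃ j, N j) ∪ ⋃ i, (Ep i ∪ Em i) := by
    intro ω hω
    by_contra hcon
    simp only [Set.mem_union, Set.mem_iUnion, not_or, not_exists] at hcon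
    obtain ⟨hn, he⟩ := hcon
    apply hω
    have hA : ∀ j, (Matrix.of (ω j).1)⁻¹ *ᵥ ((Matrix.of (ω j).1) *ᵥ A + (ω j).2)
        = fun i => A i + err i (ω j) := by
      intro j
      have hu : IsUnit (Matrix.of (ω j).1).det := by
        rw [isUnit_iff_ne_zero]; exact hn j
      rw [Matrix.mulVec_add, Matrix.mulVec_mulVec, Matrix.nonsing_inv_mul _ hu, Matrix.one_mulVec]
      rfl
    have hT' : T = {ω | let Atil : Fin k → Fin p → ℝ := fun j =>
               (Matrix.of (ω j).1)⁻¹.mulVec ((Matrix.of (ω j).1).mulVec A + (ω j).2)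
             let Δ : Fin p → ℝ := (fun i => sampleMedian fun j => Atil j i) - A
             |Δ ⬝ᵥ (Matrix.diagonal fun i => σ i ^ 2).mulVec Δ|
               ≤ σy ^ 2 * (p : ℝ) * s} := rfl
    rw [hT']
    simp only [Set.mem_ofPred_eq, hA]
    set D : Fin p → ℝ := (fun i => sampleMedian fun j => A i + err i (ω j)) - A with hD
    have hDi : ∀ i, |σ i / σy * D i| ≤ τ := by
      intro i
      have hc : 0 < σ i / σy := div_pos (hσ i) hσy
      rw [abs_le]
      constructor
      · by_contra hlt
        push Not at hlt
        apply (he i).2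
        have hmed : (sampleMedian fun j => A i + err i (ω j)) < A i + (-τ) / (σ i / σy) := by
          rw [← sub_lt_iff_lt_add', lt_div_iff₀' hc]; exact hlt
        have := median_lt hk0 _ _ hmed
        refine this.trans_eq ?_
        congr 2
        ext j
        simp only [Finset.mem_filter, Finset.mem_univ, true_and, Bm, Set.mem_ofPred_eq, Set.mem_Iio]
        rw [add_lt_add_iff_left, lt_div_iff₀' hc]
      · by_contra hlt
        push Not at hlt
        apply (he i).1
        have hmed : A i + τ / (σ i / σy) < (sampleMedian fun j => A i + err i (ω j)) := by
          rw [← lt_sub_iff_add_lt', div_lt_iff₀' hc]; exact hlt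
        have := median_gt hk0 _ _ hmed
        refine this.trans_eq ?_
        congr 2
        ext j
        simp only [Finset.mem_filter, Finset.mem_univ, true_and, Bp, Set.mem_ofPred_eq, Set.mem_Ioi]
        rw [add_lt_add_iff_left, div_lt_iff₀' hc]
    have hterm : ∀ i, D i * (σ i ^ 2 * D i) ≤ σy ^ 2 * s := by
      intro i
      have h1 := sq_le_sq' (abs_le.mp (hDi i)).1 (abs_le.mp (hDi i)).2
      rw [hτs] at h1
      have h2 : D i * (σ i ^ 2 * D i) = σy ^ 2 * (σ i / σy * D i) ^ 2 := by
        field_simp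
      rw [h2]
      gcongr
    have hsum : D ⬝ᵥ (Matrix.diagonal fun i => σ i ^ 2) *ᵥ D = ∑ i, D i * (σ i ^ 2 * D i) := by
      simp [dotProduct, Matrix.mulVec_diagonal]
    rw [hsum, abs_of_nonneg]
    · calc _ ≤ ∑ i : Fin p, σy ^ 2 * s := Finset.sum_le_sum fun i _ => hterm i
        _ = _ := by simp; ring
    · apply Finset.sum_nonneg
      intro i _
      have : D i * (σ i ^ 2 * D i) = (σ i * D i) ^ 2 := by ring
      rw [this]; positivity
  have hbad : μ Tᶜ ≤ ENNReal.ofReal (p * δ) := by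
    calc μ Tᶜ ≤ μ ((⋃ j, N j) ∪ ⋃ i, (Ep i ∪ Em i)) := measure_mono hsub
      _ ≤ μ (⋃ j, N j) + μ (⋃ i, (Ep i ∪ Em i)) := measure_union_le _ _
      _ ≤ 0 + ∑ i : Fin p, ENNReal.ofReal δ := by
          gcongr
          · rw [measure_iUnion_null hN]
          · refine (measure_iUnion_fintype_le _ _).trans (Finset.sum_le_sum fun i _ => ?_)
            refine (measure_union_le _ _).trans ((add_le_add (hEp i) (hEm i)).trans_eq ?_)
            rw [← ENNReal.ofReal_add (by positivity) (by positivity)]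
            congr 1; ring
      _ = _ := by
          rw [ENNReal.ofReal_mul (by positivity)]
          simp
  have h1 : 1 ≤ μ T + μ Tᶜ := by
    have := measure_univ_le_add_compl (μ := μ) T
    rwa [measure_univ] at this
  rw [ENNReal.ofReal_sub _ (by positivity), ENNReal.ofReal_one]
  rw [tsub_le_iff_right]
  exact h1.trans (by gcongr)
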